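/- Let a_1, …, a_r : [0,2π)^ν → ℝ be bounded measurable real-valued functions, and for each k let [m_k, M_k] be a closed interval containing the essential range of a_k, so that each Toeplitz compression T_n(a_k) is a Hermitian matrix with all eigenvalues in [m_k, M_k]. Then for any continuous functions f_k : [m_k, M_k] → ℝ (applied to T_n(a_k) via the continuous functional calculus), lim_{n→∞} (1/n^ν) Tr[ f_1(T_n(a_1)) · … · f_r(T_n(a_r)) ] = (2π)^{−ν} ∫_{[0,2π)^ν} f_1(a_1(x)) · … · f_r(a_r(x)) dx. -/

import Mathlib

open MeasureTheory Filter Matrix Set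

noncomputable section

/-- The cube `[0, 2π)^ν`. -/
def cube (ν : ℕ) : Set (Fin ν → ℝ) := Set.univ.pi fun _ => Set.Ico 0 (2 * Real.pi)

/-- Fourier coefficient of `a : [0,2π)^ν → ℂ` at `j ∈ ℤ^ν`:
`â(j) = (2π)^{−ν} ∫_{[0,2π)^ν} a(x) e^{−i j·x} dx`. -/
def fourierCoefficient {ν : ℕ} (a : (Fin ν → ℝ) → ℂ) (j : Fin ν → ℤ) : ℂ :=
  (((2 * Real.pi) ^ ν : ℝ) : ℂ)⁻¹ *
    ∫ x in cube ν, a x * Complex.exp (-Complex.I * ∑ m, (j m : ℂ) * (x m : ℂ))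

/-- The Toeplitz compression `T_n(a)`: the `n^ν × n^ν` matrix indexed by multi-indices
`j, k ∈ {0,…,n−1}^ν` with entries `â(j−k)`. -/
def toeplitz {ν : ℕ} (n : ℕ) (a : (Fin ν → ℝ) → ℂ) :
    Matrix (Fin ν → Fin n) (Fin ν → Fin n) ℂ :=
  Matrix.of fun j k => fourierCoefficient a fun m => (j m : ℤ) - (k m : ℤ)

set_option linter.all false
section hilb
lemma le_of_sq_le_sq₀ {a b : ℝ} (h : a ^ 2 ≤ b ^ 2) (hb : 0 ≤ b) : a ≤ b := by
  by_contra! hc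
  nlinarith
open scoped Matrix.Norms.L2Operator MatrixOrder ComplexOrder

variable {ι : Type*} [Fintype ι] [DecidableEq ι]

/-- Hilbert-Schmidt norm -/
def hsn (A : Matrix ι ι ℂ) : ℝ := ‖(WithLp.toLp 2 (fun p : ι × ι => A p.1 p.2) : EuclideanSpace ℂ (ι × ι))‖

lemma hsn_sq (A : Matrix ι ι ℂ) : hsn A ^ 2 = ∑ k, ∑ j, ‖A j k‖ ^ 2 := by
  rw [hsn, EuclideanSpace.norm_sq_eq, Fintype.sum_prod_type_right]

lemma hsn_nonneg (A : Matrix ι ι ℂ) : 0 ≤ hsn A := norm_nonneg _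

lemma hsn_add (A B : Matrix ι ι ℂ) : hsn (A + B) ≤ hsn A + hsn B := norm_add_le
  (WithLp.toLp 2 (fun p : ι × ι => A p.1 p.2) : EuclideanSpace ℂ (ι × ι)) (WithLp.toLp 2 (fun p : ι × ι => B p.1 p.2))

lemma hsn_mul_left (A B : Matrix ι ι ℂ) : hsn (A * B) ≤ ‖A‖ * hsn B := by
  refine le_of_sq_le_sq₀ ?_ (mul_nonneg (norm_nonneg _) (hsn_nonneg _))
  rw [mul_pow, hsn_sq, hsn_sq, Finset.mul_sum]
  refine Finset.sum_le_sum fun k _ => ?_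
  have := l2_opNorm_mulVec A (WithLp.toLp 2 (fun j => B j k))
  have h2 := pow_le_pow_left₀ (norm_nonneg _) this 2
  rw [mul_pow, EuclideanSpace.norm_sq_eq, EuclideanSpace.norm_sq_eq] at h2
  exact h2

lemma hsn_conjTranspose (A : Matrix ι ι ℂ) : hsn Aᴴ = hsn A := by
  refine (sq_eq_sq₀ (hsn_nonneg _) (hsn_nonneg _)).1 ?_
  rw [hsn_sq, hsn_sq, Finset.sum_comm]
  simp

lemma hsn_mul_right (A B : Matrix ι ι ℂ) : hsn (A * B) ≤ hsn A * ‖B‖ := by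
  rw [← hsn_conjTranspose, conjTranspose_mul]
  refine (hsn_mul_left _ _).trans ?_
  rw [l2_opNorm_conjTranspose, hsn_conjTranspose, mul_comm]

lemma hsn_le (A : Matrix ι ι ℂ) : hsn A ≤ ‖A‖ * √(Fintype.card ι) := by
  have := hsn_mul_left A 1
  rw [mul_one] at this
  convert this using 2
  refine (Real.sqrt_eq_iff_eq_sq (by positivity) (hsn_nonneg _)).2 ?_
  rw [hsn_sq]
  simp [Matrix.one_apply, apply_ite]

lemma trace_le_hsn (A : Matrix ι ι ℂ) : ‖A.trace‖ ≤ √(Fintype.card ι) * hsn A := by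
  refine le_of_sq_le_sq₀ ?_ (mul_nonneg (Real.sqrt_nonneg _) (hsn_nonneg _))
  rw [mul_pow, Real.sq_sqrt (by positivity), hsn_sq]
  calc ‖A.trace‖ ^ 2 ≤ (∑ i, ‖A i i‖) ^ 2 := by
        gcongr; exact norm_sum_le _ _
    _ ≤ (Fintype.card ι) * ∑ i, ‖A i i‖ ^ 2 := by
        simpa using sq_sum_le_card_mul_sum_sq (s := Finset.univ) (f := fun i => ‖A i i‖)
    _ ≤ _ := by
        gcongr with i
        exact Finset.single_le_sum (f := fun j => ‖A j i‖ ^ 2) (fun j _ => by positivity) (Finset.mem_univ i)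

variable {H : Type*} [NormedAddCommGroup H] [InnerProductSpace ℂ H] 

/-- compression -/
def compr (v : ι → H) (A : H →L[ℂ] H) : Matrix ι ι ℂ := Matrix.of fun j k => inner ℂ (v j) (A (v k))

lemma compr_sub (v : ι → H) (A B : H →L[ℂ] H) : compr v (A - B) = compr v A - compr v B := by
  ext i j; simp [compr, inner_sub_right]

lemma compr_norm_le {v : ι → H} (hv : Orthonormal ℂ v) (A : H →L[ℂ] H) : ‖compr v A‖ ≤ ‖A‖ := by
  rw [cstar_norm_def]
  refine ContinuousLinearMap.opNorm_le_bound _ (norm_nonneg _) fun x => ?_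
  refine le_of_sq_le_sq₀ ?_ (by positivity)
  set y : H := ∑ k, x k • v k
  have hy : ‖y‖ = ‖x‖ := by
    refine (sq_eq_sq₀ (norm_nonneg _) (norm_nonneg _)).1 ?_
    rw [EuclideanSpace.norm_sq_eq, ← inner_self_eq_norm_sq (𝕜 := ℂ), hv.inner_sum]
    simp only [map_sum]
    refine Finset.sum_congr rfl fun i _ => ?_
    rw [mul_comm, RCLike.mul_conj]; norm_cast
  rw [EuclideanSpace.norm_sq_eq]
  have h1 : ∀ j, (toEuclideanCLM (n := ι) (𝕜 := ℂ) (compr v A) x) j = inner ℂ (v j) (A y) := by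
    intro j
    rw [ofLp_toEuclideanCLM]
    simp only [mulVec, dotProduct, compr, of_apply, y, map_sum, inner_sum, map_smul, inner_smul_right]
    exact Finset.sum_congr rfl fun i _ => mul_comm _ _
  simp only [h1]
  refine (hv.sum_inner_products_le (x := A y) (s := Finset.univ)).trans ?_
  rw [← hy]
  exact pow_le_pow_left₀ (norm_nonneg _) (A.le_opNorm y) 2

lemma compr_mul_hsn {v : ι → H} (hv : Orthonormal ℂ v) (A B : H →L[ℂ] H) :
    hsn (compr v (A ∘L B) - compr v A * compr v B) ^ 2 ≤
      ‖A‖ ^ 2 * ∑ k, (‖B (v k)‖ ^ 2 - ∑ l, ‖inner ℂ (v l) (B (v k))‖ ^ 2) := by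
  rw [hsn_sq, Finset.mul_sum]
  refine Finset.sum_le_sum fun k _ => ?_
  set g : H := B (v k) - ∑ l, inner ℂ (v l) (B (v k)) • v l with hg
  have h1 : ∀ j, (compr v (A ∘L B) - compr v A * compr v B) j k = inner ℂ (v j) (A g) := by
    intro j
    simp only [hg, compr, Matrix.sub_apply, Matrix.mul_apply, of_apply, map_sub, map_sum, inner_sub_right, inner_sum, map_smul, inner_smul_right, ContinuousLinearMap.comp_apply]
    congr 1
    exact Finset.sum_congr rfl fun i _ => mul_comm _ _
  simp only [h1]
  refine (hv.sum_inner_products_le (x := A g) (s := Finset.univ)).trans ?_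
  have h2 : ‖g‖ ^ 2 = ‖B (v k)‖ ^ 2 - ∑ l, ‖inner ℂ (v l) (B (v k))‖ ^ 2 := by
    have hin : ∀ l, inner ℂ (v l) g = 0 := by
      intro l
      rw [hg, inner_sub_right, hv.inner_right_fintype, sub_self]
    have h3 : B (v k) = g + ∑ l, inner ℂ (v l) (B (v k)) • v l := by rw [hg]; abel
    have h4 := norm_add_sq_eq_norm_sq_add_norm_sq_of_inner_eq_zero (𝕜 := ℂ) g
      (∑ l, inner ℂ (v l) (B (v k)) • v l) (by
        rw [inner_sum]
        refine Finset.sum_eq_zero fun l _ => ?_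
        rw [inner_smul_right, inner_eq_zero_symm.1 (hin l), mul_zero])
    rw [← h3] at h4
    have h5 : ‖∑ l, inner ℂ (v l) (B (v k)) • v l‖ ^ 2 = ∑ l, ‖inner ℂ (v l) (B (v k))‖ ^ 2 := by
      rw [← inner_self_eq_norm_sq (𝕜 := ℂ), hv.inner_sum]
      simp only [map_sum]
      refine Finset.sum_congr rfl fun i _ => ?_
      rw [mul_comm, RCLike.mul_conj]; norm_cast
    rw [← h5]; nlinarith [h4]
  rw [← h2, ← mul_pow]
  exact pow_le_pow_left₀ (norm_nonneg _) (A.le_opNorm g) 2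

lemma compr_posSemidef {v : ι → H} {A : H →L[ℂ] H} (hA : A.IsPositive) : (compr v A).PosSemidef := by
  refine Matrix.PosSemidef.of_dotProduct_mulVec_nonneg ?_ ?_
  · ext i j
    simp only [compr, conjTranspose_apply, of_apply, RCLike.star_def, inner_conj_symm]
    exact hA.isSymmetric _ _
  · intro x
    have : star x ⬝ᵥ compr v A *ᵥ x = inner ℂ (∑ k, x k • v k) (A (∑ k, x k • v k)) := by
      simp only [mulVec, dotProduct, compr, of_apply, map_sum, inner_sum, sum_inner, map_smul, inner_smul_right, inner_smul_left, Finset.mul_sum]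
      rw [Finset.sum_comm]
      refine Finset.sum_congr rfl fun i _ => Finset.sum_congr rfl fun j _ => ?_
      simp; ring
    rw [this]
    exact hA.inner_nonneg_right _

end hilb

section mulop
variable {X : Type*} [MeasurableSpace X]

/-- bounded measurable real function -/
def BM (φ : X → ℝ) : Prop := Measurable φ ∧ ∃ C, ∀ x, |φ x| ≤ C

lemma BM.mul {φ ψ : X → ℝ} (h : BM φ) (h' : BM ψ) : BM (fun x => φ x * ψ x) := by
  obtain ⟨h1, C, hC⟩ := h
  obtain ⟨h1', C', hC'⟩ := h'
  refine ⟨h1.mul h1', C * C', fun x => ?_⟩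
  rw [abs_mul]
  exact mul_le_mul (hC x) (hC' x) (abs_nonneg _) ((abs_nonneg _).trans (hC x))

lemma BM.add {φ ψ : X → ℝ} (h : BM φ) (h' : BM ψ) : BM (fun x => φ x + ψ x) := by
  obtain ⟨h1, C, hC⟩ := h
  obtain ⟨h1', C', hC'⟩ := h'
  exact ⟨h1.add h1', C + C', fun x => (abs_add_le _ _).trans (add_le_add (hC x) (hC' x))⟩

lemma BM.const (c : ℝ) : BM (fun _ : X => c) := ⟨measurable_const, |c|, fun _ => le_rfl⟩

lemma BM.sub {φ ψ : X → ℝ} (h : BM φ) (h' : BM ψ) : BM (fun x => φ x - ψ x) := by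
  simpa [sub_eq_add_neg] using h.add ((BM.const (-1)).mul h')

variable {μ : Measure X}

lemma BM.memLp {φ : X → ℝ} (h : BM φ) {g : X → ℂ} (hg : MemLp g 2 μ) :
    MemLp (fun x => (φ x : ℂ) * g x) 2 μ := by
  obtain ⟨h1, C, hC⟩ := h
  refine hg.of_le_mul (c := C) (((Complex.measurable_ofReal.comp h1).aestronglyMeasurable).mul hg.1) (Eventually.of_forall fun x => ?_)
  simp only [norm_mul, Complex.norm_real, Real.norm_eq_abs]
  exact mul_le_mul_of_nonneg_right (hC x) (norm_nonneg _)

lemma BM.integrable [IsFiniteMeasure μ] {φ : X → ℝ} (h : BM φ) : Integrable φ μ := by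
  obtain ⟨h1, C, hC⟩ := h
  exact Integrable.of_bound h1.aestronglyMeasurable C (Eventually.of_forall hC)

open Classical in
/-- multiplication operator -/
def mulOp (μ : Measure X) (φ : X → ℝ) : Lp ℂ 2 μ →L[ℂ] Lp ℂ 2 μ :=
  if h : BM φ then
    LinearMap.mkContinuous
      { toFun := fun g => (h.memLp (Lp.memLp g)).toLp _
        map_add' := fun g g' => by
          rw [← MemLp.toLp_add]
          refine MemLp.toLp_congr _ _ ?_
          filter_upwards [Lp.coeFn_add g g'] with x hx
          simp only [Pi.add_apply]; rw [hx, Pi.add_apply, mul_add]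
        map_smul' := fun c g => by
          rw [RingHom.id_apply, ← MemLp.toLp_const_smul]
          refine MemLp.toLp_congr _ _ ?_
          filter_upwards [Lp.coeFn_smul c g] with x hx
          simp [hx]; ring } h.2.choose (fun g => by
            refine Lp.norm_le_mul_norm_of_ae_le_mul ?_
            filter_upwards [(h.memLp (Lp.memLp g)).coeFn_toLp] with x hx
            simp only [LinearMap.coe_mk, AddHom.coe_mk, hx, norm_mul, Complex.norm_real, Real.norm_eq_abs]
            exact mul_le_mul_of_nonneg_right (h.2.choose_spec x) (norm_nonneg _))
  else 0

lemma coeFn_mulOp {φ : X → ℝ} (h : BM φ) (g : Lp ℂ 2 μ) :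
    mulOp μ φ g =ᵐ[μ] fun x => (φ x : ℂ) * g x := by
  rw [mulOp, dif_pos h]
  exact (h.memLp (Lp.memLp g)).coeFn_toLp

lemma mulOp_norm_le {φ : X → ℝ} (h : BM φ) {C : ℝ} (h0 : 0 ≤ C) (hC : ∀ x, |φ x| ≤ C) : ‖mulOp μ φ‖ ≤ C := by
  refine ContinuousLinearMap.opNorm_le_bound _ h0 fun g => ?_
  refine Lp.norm_le_mul_norm_of_ae_le_mul ?_
  filter_upwards [coeFn_mulOp h g] with x hx
  simp only [hx, norm_mul, Complex.norm_real, Real.norm_eq_abs]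
  exact mul_le_mul_of_nonneg_right (hC x) (norm_nonneg _)

lemma mulOp_mul {φ ψ : X → ℝ} (h : BM φ) (h' : BM ψ) :
    mulOp μ (fun x => φ x * ψ x) = mulOp μ φ ∘L mulOp μ ψ := by
  refine ContinuousLinearMap.ext fun g => Lp.ext ?_
  filter_upwards [coeFn_mulOp (h.mul h') g, coeFn_mulOp h' g, coeFn_mulOp h (mulOp μ ψ g)] with x h1 h2 h3
  rw [h1, ContinuousLinearMap.comp_apply, h3, h2]
  push_cast; ring

lemma mulOp_add {φ ψ : X → ℝ} (h : BM φ) (h' : BM ψ) :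
    mulOp μ (fun x => φ x + ψ x) = mulOp μ φ + mulOp μ ψ := by
  refine ContinuousLinearMap.ext fun g => Lp.ext ?_
  filter_upwards [coeFn_mulOp (h.add h') g, coeFn_mulOp h' g, coeFn_mulOp h g, Lp.coeFn_add (mulOp μ φ g) (mulOp μ ψ g)] with x h1 h2 h3 h4
  rw [h1, _root_.add_apply, h4, Pi.add_apply, h3, h2]
  push_cast; ring

lemma mulOp_sub {φ ψ : X → ℝ} (h : BM φ) (h' : BM ψ) :
    mulOp μ (fun x => φ x - ψ x) = mulOp μ φ - mulOp μ ψ := by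
  rw [eq_sub_iff_add_eq, ← mulOp_add (h.sub h') h']
  simp

lemma mulOp_const (c : ℝ) : mulOp μ (fun _ => c) = (c : ℂ) • ContinuousLinearMap.id ℂ _ := by
  refine ContinuousLinearMap.ext fun g => Lp.ext ?_
  filter_upwards [coeFn_mulOp (BM.const c) g, Lp.coeFn_smul (c : ℂ) g] with x h1 h2
  rw [h1]
  simp only [_root_.smul_apply, ContinuousLinearMap.id_apply, h2]
  rfl

lemma inner_mulOp {φ : X → ℝ} (h : BM φ) (g g' : Lp ℂ 2 μ) :
    inner ℂ g (mulOp μ φ g') = ∫ x, (φ x : ℂ) * (g' x * starRingEnd ℂ (g x)) ∂μ := by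
  rw [L2.inner_def]
  refine integral_congr_ae ?_
  filter_upwards [coeFn_mulOp h g'] with x hx
  rw [hx, RCLike.inner_apply]; ring

lemma mulOp_symm {φ : X → ℝ} (h : BM φ) (g g' : Lp ℂ 2 μ) :
    inner ℂ (mulOp μ φ g) g' = inner ℂ g (mulOp μ φ g') := by
  rw [inner_mulOp h, L2.inner_def]
  refine integral_congr_ae ?_
  filter_upwards [coeFn_mulOp h g] with x hx
  rw [hx, RCLike.inner_apply]; simp; ring

lemma mulOp_isPositive {φ : X → ℝ} (h : BM φ) (h0 : ∀ x, 0 ≤ φ x) : (mulOp μ φ).IsPositive := by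
  refine (ContinuousLinearMap.isPositive_def' ).2 ⟨?_, fun g => ?_⟩
  · exact (ContinuousLinearMap.isSelfAdjoint_iff_isSymmetric).2 (mulOp_symm h)
  · rw [ContinuousLinearMap.reApplyInnerSelf_apply, mulOp_symm h, inner_mulOp h]
    have : ∀ x, (φ x : ℂ) * (g x * starRingEnd ℂ (g x)) = ((φ x * ‖g x‖ ^ 2 : ℝ) : ℂ) := by
      intro x
      rw [RCLike.mul_conj]; push_cast; rfl
    simp only [this, integral_ofReal]
    simp only [RCLike.re_eq_complex_re]
    rw [integral_complex_ofReal, Complex.ofReal_re]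
    exact integral_nonneg fun x => mul_nonneg (h0 x) (by positivity)

end mulop

section fsys
open scoped Matrix.Norms.L2Operator
variable {X : Type*} [MeasurableSpace X] {μ : Measure X} [IsProbabilityMeasure μ] {ν : ℕ}

/-- Fourier system -/
structure FSys (μ : Measure X) (ν : ℕ) where
  e : HilbertBasis (Fin ν → ℤ) ℂ (Lp ℂ 2 μ)
  E : (Fin ν → ℤ) → X → ℂ
  ae : ∀ j, e j =ᵐ[μ] E j
  mulE : ∀ j k x, E k x * starRingEnd ℂ (E j x) = starRingEnd ℂ (E (j - k) x)
  zeroE : ∀ x, E 0 x = 1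

/-- coefficients -/
def FSys.coef (F : FSys μ ν) (φ : X → ℝ) (j : Fin ν → ℤ) : ℂ :=
  ∫ x, (φ x : ℂ) * starRingEnd ℂ (F.E j x) ∂μ

/-- index -/
def idx {n : ℕ} (j : Fin ν → Fin n) : Fin ν → ℤ := fun i => (j i : ℤ)

lemma idx_inj {n : ℕ} : Function.Injective (idx (ν := ν) (n := n)) := by
  intro j k h
  funext i
  have := congrFun h i
  simp only [idx] at this
  exact Fin.ext (by exact_mod_cast this)

/-- Toeplitz -/
def FSys.T (F : FSys μ ν) (n : ℕ) (φ : X → ℝ) : Matrix (Fin ν → Fin n) (Fin ν → Fin n) ℂ :=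
  compr (fun j => F.e (idx j)) (mulOp μ φ)

lemma FSys.inner_e (F : FSys μ ν) {φ : X → ℝ} (h : BM φ) (j k : Fin ν → ℤ) :
    inner ℂ (F.e j) (mulOp μ φ (F.e k)) = F.coef φ (j - k) := by
  rw [inner_mulOp h, FSys.coef]
  refine integral_congr_ae ?_
  filter_upwards [F.ae j, F.ae k] with x h1 h2
  rw [h1, h2, F.mulE]

lemma FSys.orth (F : FSys μ ν) (n : ℕ) : Orthonormal ℂ (fun j : Fin ν → Fin n => F.e (idx j)) :=
  F.e.orthonormal.comp _ idx_inj

lemma FSys.T_apply (F : FSys μ ν) {n : ℕ} {φ : X → ℝ} (h : BM φ) (j k : Fin ν → Fin n) :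
    F.T n φ j k = F.coef φ (idx j - idx k) := F.inner_e h _ _

lemma FSys.norm_sq (F : FSys μ ν) {φ : X → ℝ} (h : BM φ) (k : Fin ν → ℤ) :
    ‖mulOp μ φ (F.e k)‖ ^ 2 = ‖mulOp μ φ (F.e 0)‖ ^ 2 := by
  have : ∀ k, ‖mulOp μ φ (F.e k)‖ ^ 2 = RCLike.re (F.coef (fun x => φ x * φ x) 0) := by
    intro k
    rw [← inner_self_eq_norm_sq (𝕜 := ℂ), mulOp_symm h, ← ContinuousLinearMap.comp_apply, ← mulOp_mul h h, F.inner_e (h.mul h), sub_self]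
  rw [this, this]

lemma FSys.hasSum (F : FSys μ ν) {φ : X → ℝ} (h : BM φ) :
    HasSum (fun j => ‖F.coef φ j‖ ^ 2) (‖mulOp μ φ (F.e 0)‖ ^ 2) := by
  have := F.e.hasSum_inner_mul_inner (mulOp μ φ (F.e 0)) (mulOp μ φ (F.e 0))
  have h2 := (Complex.reCLM.hasSum this)
  have h3 : Complex.reCLM (inner ℂ (mulOp μ φ (F.e 0)) (mulOp μ φ (F.e 0))) = ‖mulOp μ φ (F.e 0)‖ ^ 2 :=
    inner_self_eq_norm_sq (𝕜 := ℂ) (mulOp μ φ (F.e 0))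
  rw [h3] at h2
  refine h2.congr_fun fun j => ?_
  rw [← inner_conj_symm (mulOp μ φ (F.e 0)) (F.e j), F.inner_e h, sub_zero, mul_comm, RCLike.mul_conj]
  simp [← Complex.ofReal_pow]

/-- combinatorial lemma -/
lemma tend_box (d : (Fin ν → ℤ) → ℝ) (hd : ∀ j, 0 ≤ d j) {s : ℝ} (hs : HasSum d s) :
    Tendsto (fun n : ℕ => ((n : ℝ) ^ ν)⁻¹ * ∑ k : Fin ν → Fin n, (s - ∑ l : Fin ν → Fin n, d (idx l - idx k)))
      atTop (nhds 0) := by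
  have hup : ∀ (n : ℕ) (k : Fin ν → Fin n), ∑ l : Fin ν → Fin n, d (idx l - idx k) ≤ s := by
    intro n k
    have : ∑ l : Fin ν → Fin n, d (idx l - idx k) = ∑ j ∈ Finset.univ.map
      ⟨fun l : Fin ν → Fin n => idx l - idx k, fun l l' h => idx_inj (sub_left_injective h)⟩, d j := by
      rw [Finset.sum_map]; rfl
    rw [this]
    exact sum_le_hasSum _ (fun j _ => hd j) hs
  have hs0 : 0 ≤ s := hs.nonneg hd
  rw [Metric.tendsto_atTop]
  intro ε hε
  obtain ⟨S, hS⟩ : ∃ S : Finset (Fin ν → ℤ), s - ε / 2 < ∑ j ∈ S, d j := by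
    have := (hs.eventually (lt_mem_nhds (show s - ε / 2 < s by linarith)))
    exact this.exists
  obtain ⟨R, hR⟩ : ∃ R : ℕ, ∀ j ∈ S, ∀ i, |j i| ≤ R := by
    refine ⟨∑ j ∈ S, ∑ i, (j i).natAbs, fun j hj i => ?_⟩
    rw [Int.abs_eq_natAbs]
    norm_cast
    exact (Finset.single_le_sum (f := fun i => (j i).natAbs) (fun _ _ => Nat.zero_le _) (Finset.mem_univ i)).trans
      (Finset.single_le_sum (f := fun j : Fin ν → ℤ => ∑ i, (j i).natAbs) (fun _ _ => Nat.zero_le _) hj)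
  -- inner box
  let G : ∀ n : ℕ, Finset (Fin ν → Fin n) := fun n =>
    Fintype.piFinset fun _ => Finset.univ.filter fun t : Fin n => R ≤ (t : ℕ) ∧ (t : ℕ) + R < n
  have hG : ∀ n k, k ∈ G n → s - ε / 2 ≤ ∑ l : Fin ν → Fin n, d (idx l - idx k) := by
    intro n k hk
    refine hS.le.trans ?_
    simp only [G, Fintype.mem_piFinset, Finset.mem_filter, Finset.mem_univ, true_and] at hk
    have : ∑ l : Fin ν → Fin n, d (idx l - idx k) = ∑ j ∈ Finset.univ.map
      ⟨fun l : Fin ν → Fin n => idx l - idx k, fun l l' h => idx_inj (sub_left_injective h)⟩, d j := by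
      rw [Finset.sum_map]; rfl
    rw [this]
    refine Finset.sum_le_sum_of_subset_of_nonneg ?_ (fun j _ _ => hd j)
    intro j hj
    rw [Finset.mem_map]
    have hb : ∀ i, 0 ≤ j i + (k i : ℤ) ∧ j i + (k i : ℤ) < n := by
      intro i
      have := abs_le.1 (hR j hj i)
      have := hk i
      omega
    refine ⟨fun i => ⟨(j i + (k i : ℤ)).toNat, by have := hb i; omega⟩, Finset.mem_univ _, ?_⟩
    funext i
    have := hb i
    change (((j i + (k i : ℤ)).toNat : ℕ) : ℤ) - (k i : ℤ) = j i
    omega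
  have hGc : ∀ n, ((n - 2 * R : ℕ) : ℝ) ^ ν ≤ ((G n).card : ℝ) := by
    intro n
    have h1 : (G n).card = (Finset.univ.filter fun t : Fin n => R ≤ (t : ℕ) ∧ (t : ℕ) + R < n).card ^ ν := by
      simp [G, Fintype.card_piFinset]
    have h2 : n - 2 * R ≤ (Finset.univ.filter fun t : Fin n => R ≤ (t : ℕ) ∧ (t : ℕ) + R < n).card := by
      rw [← Fintype.card_fin (n - 2 * R), ← Finset.card_univ]
      refine Finset.card_le_card_of_injOn (fun t => ⟨t + R, by omega⟩) ?_ ?_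
      · intro t _
        simp; omega
      · intro t _ t' _ h
        simp at h
        omega
    rw [h1]
    exact_mod_cast Nat.pow_le_pow_left h2 ν
  have hlim : Tendsto (fun n : ℕ => s * (1 - (((n - 2 * R : ℕ) : ℝ) / n) ^ ν)) atTop (nhds 0) := by
    have h1 : Tendsto (fun n : ℕ => ((n - 2 * R : ℕ) : ℝ) / n) atTop (nhds 1) := by
      have h2 : Tendsto (fun n : ℕ => 1 - (2 * R : ℝ) / n) atTop (nhds (1 - 0)) :=
        tendsto_const_nhds.sub (tendsto_const_div_atTop_nhds_zero_nat _)
      rw [sub_zero] at h2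
      refine h2.congr' ?_
      filter_upwards [eventually_ge_atTop (2 * R + 1)] with n hn
      have : (n : ℝ) ≠ 0 := by norm_cast; omega
      rw [Nat.cast_sub (by omega)]
      push_cast
      field_simp
    have h3 := ((tendsto_const_nhds (x := (1:ℝ))).sub (h1.pow ν)).const_mul s
    simpa using h3
  obtain ⟨N, hN⟩ := (Metric.tendsto_atTop.1 hlim) (ε / 2) (by linarith)
  refine ⟨max N 1, fun n hn => ?_⟩
  have hn1 : 1 ≤ n := le_of_max_le_right hn
  have hpos : (0 : ℝ) < (n : ℝ) ^ ν := by positivity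
  have hnon : 0 ≤ ∑ k : Fin ν → Fin n, (s - ∑ l : Fin ν → Fin n, d (idx l - idx k)) :=
    Finset.sum_nonneg fun k _ => sub_nonneg.2 (hup n k)
  rw [Real.dist_eq, sub_zero, abs_of_nonneg (by positivity)]
  have hb : ∑ k : Fin ν → Fin n, (s - ∑ l : Fin ν → Fin n, d (idx l - idx k)) ≤
      (n : ℝ) ^ ν * (ε / 2) + s * ((n : ℝ) ^ ν - ((G n).card : ℝ)) := by
    calc _ ≤ ∑ k : Fin ν → Fin n, (ε / 2 + (s - if k ∈ G n then s else 0)) := by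
          refine Finset.sum_le_sum fun k _ => ?_
          split_ifs with hk
          · linarith [hG n k hk]
          · have : 0 ≤ ∑ l : Fin ν → Fin n, d (idx l - idx k) := Finset.sum_nonneg fun _ _ => hd _
            linarith
      _ = _ := by
          rw [Finset.sum_add_distrib, Finset.sum_sub_distrib, ← Finset.sum_filter]
          simp
          ring
  have h4 := hN n (le_of_max_le_left hn)
  rw [Real.dist_eq, sub_zero] at h4
  have h5 := (le_abs_self _).trans_lt h4
  have h6 := hGc n
  rw [inv_mul_lt_iff₀ hpos]
  refine hb.trans_lt ?_
  have h7 : s * ((n : ℝ) ^ ν - ((G n).card : ℝ)) ≤ s * ((n : ℝ) ^ ν - ((n - 2 * R : ℕ) : ℝ) ^ ν) := by gcongr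
  have h8 : s * ((n : ℝ) ^ ν - ((n - 2 * R : ℕ) : ℝ) ^ ν) = (n : ℝ) ^ ν * (s * (1 - (((n - 2 * R : ℕ) : ℝ) / n) ^ ν)) := by
    rw [div_pow]; field_simp
  have h9 := mul_lt_mul_of_pos_left h5 hpos
  linarith


lemma T_mul (F : FSys μ ν) {φ ψ : X → ℝ} (h : BM φ) (h' : BM ψ) :
    Tendsto (fun n : ℕ => hsn (F.T n φ * F.T n ψ - F.T n (fun x => φ x * ψ x)) / √((n : ℝ) ^ ν)) atTop (nhds 0) := by
  have h1 := (tend_box (fun j => ‖F.coef ψ j‖ ^ 2) (fun j => by positivity) (F.hasSum h')).const_mul (‖mulOp μ φ‖ ^ 2)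
  rw [mul_zero] at h1
  have h2 := h1.sqrt
  rw [Real.sqrt_zero] at h2
  refine squeeze_zero (fun n => div_nonneg (hsn_nonneg _) (Real.sqrt_nonneg _)) (fun n => ?_) h2
  refine Real.le_sqrt_of_sq_le ?_
  rw [div_pow, Real.sq_sqrt (by positivity), div_eq_inv_mul, mul_left_comm]
  refine mul_le_mul_of_nonneg_left ?_ (by positivity)
  have h3 := compr_mul_hsn (F.orth n) (mulOp μ φ) (mulOp μ ψ)
  have h4 : hsn (F.T n φ * F.T n ψ - F.T n (fun x => φ x * ψ x)) = hsn (F.T n (fun x => φ x * ψ x) - F.T n φ * F.T n ψ) := by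
    refine (sq_eq_sq₀ (hsn_nonneg _) (hsn_nonneg _)).1 ?_
    rw [hsn_sq, hsn_sq]
    simp only [Matrix.sub_apply, norm_sub_rev]
  rw [h4]
  refine (le_of_eq ?_).trans (h3.trans (le_of_eq ?_))
  · simp only [FSys.T]
    rw [mulOp_mul h h']
  · simp only [F.norm_sq h', F.inner_e h']

/-- asymptotic symbol -/
def FSys.Sym (F : FSys μ ν) (A : ∀ n, Matrix (Fin ν → Fin n) (Fin ν → Fin n) ℂ) (φ : X → ℝ) : Prop :=
  BM φ ∧ (∃ C, ∀ n, ‖A n‖ ≤ C) ∧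
    Tendsto (fun n : ℕ => hsn (A n - F.T n φ) / √((n : ℝ) ^ ν)) atTop (nhds 0)

lemma hsn_zero {ι : Type*} [Fintype ι] [DecidableEq ι] : hsn (0 : Matrix ι ι ℂ) = 0 := by
  have : hsn (0 : Matrix ι ι ℂ) ^ 2 = 0 := by rw [hsn_sq]; simp
  simpa using this

lemma FSys.T_norm_le (F : FSys μ ν) {φ : X → ℝ} (h : BM φ) {C : ℝ} (h0 : 0 ≤ C) (hC : ∀ x, |φ x| ≤ C) (n : ℕ) :
    ‖F.T n φ‖ ≤ C := (compr_norm_le (F.orth n) _).trans (mulOp_norm_le h h0 hC)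

lemma FSys.T_bdd (F : FSys μ ν) {φ : X → ℝ} (h : BM φ) : ∃ C, ∀ n, ‖F.T n φ‖ ≤ C :=
  ⟨‖mulOp μ φ‖, fun n => compr_norm_le (F.orth n) _⟩

lemma FSys.T_add (F : FSys μ ν) {φ ψ : X → ℝ} (h : BM φ) (h' : BM ψ) (n : ℕ) :
    F.T n (fun x => φ x + ψ x) = F.T n φ + F.T n ψ := by
  rw [FSys.T, mulOp_add h h']
  ext i j; simp [FSys.T, compr, inner_add_right]

lemma FSys.T_sub (F : FSys μ ν) {φ ψ : X → ℝ} (h : BM φ) (h' : BM ψ) (n : ℕ) :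
    F.T n (fun x => φ x - ψ x) = F.T n φ - F.T n ψ := by
  rw [FSys.T, mulOp_sub h h', compr_sub]; rfl

lemma FSys.T_const (F : FSys μ ν) (c : ℝ) (n : ℕ) :
    F.T n (fun _ => c) = (c : ℂ) • (1 : Matrix (Fin ν → Fin n) (Fin ν → Fin n) ℂ) := by
  rw [FSys.T, mulOp_const]
  ext i j
  have := orthonormal_iff_ite.1 (F.orth n) i j
  simp only [compr, of_apply, _root_.smul_apply, ContinuousLinearMap.id_apply, inner_smul_right, this, Matrix.smul_apply, Matrix.one_apply, smul_eq_mul]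

lemma FSys.sym_T (F : FSys μ ν) {φ : X → ℝ} (h : BM φ) : F.Sym (fun n => F.T n φ) φ := by
  refine ⟨h, F.T_bdd h, ?_⟩
  simp [hsn_zero]

lemma FSys.Sym.add {F : FSys μ ν} {A B : ∀ n, Matrix (Fin ν → Fin n) (Fin ν → Fin n) ℂ} {φ ψ : X → ℝ}
    (hA : F.Sym A φ) (hB : F.Sym B ψ) : F.Sym (fun n => A n + B n) (fun x => φ x + ψ x) := by
  obtain ⟨h1, ⟨C, hC⟩, h3⟩ := hA
  obtain ⟨h1', ⟨C', hC'⟩, h3'⟩ := hB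
  refine ⟨h1.add h1', ⟨C + C', fun n => (norm_add_le _ _).trans (add_le_add (hC n) (hC' n))⟩, ?_⟩
  have := h3.add h3'
  rw [add_zero] at this
  refine squeeze_zero (fun n => div_nonneg (hsn_nonneg _) (Real.sqrt_nonneg _)) (fun n => ?_) this
  rw [← add_div]
  gcongr
  rw [F.T_add h1 h1', add_sub_add_comm]
  exact hsn_add _ _

lemma FSys.Sym.mul {F : FSys μ ν} {A B : ∀ n, Matrix (Fin ν → Fin n) (Fin ν → Fin n) ℂ} {φ ψ : X → ℝ}
    (hA : F.Sym A φ) (hB : F.Sym B ψ) : F.Sym (fun n => A n * B n) (fun x => φ x * ψ x) := by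
  obtain ⟨h1, ⟨C, hC⟩, h3⟩ := hA
  obtain ⟨h1', ⟨C', hC'⟩, h3'⟩ := hB
  obtain ⟨D, hD⟩ := F.T_bdd h1
  refine ⟨h1.mul h1', ⟨C * C', fun n => (norm_mul_le _ _).trans
    (mul_le_mul (hC n) (hC' n) (norm_nonneg _) ((norm_nonneg _).trans (hC n)))⟩, ?_⟩
  have := ((h3.mul_const C').add (h3'.const_mul D)).add (T_mul F h1 h1')
  simp only [zero_mul, mul_zero, add_zero] at this
  refine squeeze_zero (fun n => div_nonneg (hsn_nonneg _) (Real.sqrt_nonneg _)) (fun n => ?_) this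
  have e1 : A n * B n - F.T n (fun x => φ x * ψ x) = ((A n - F.T n φ) * B n + F.T n φ * (B n - F.T n ψ)) +
      (F.T n φ * F.T n ψ - F.T n (fun x => φ x * ψ x)) := by noncomm_ring
  have e2 : hsn ((A n - F.T n φ) * B n) ≤ hsn (A n - F.T n φ) * C' :=
    (hsn_mul_right _ _).trans (mul_le_mul_of_nonneg_left (hC' n) (hsn_nonneg _))
  have e3 : hsn (F.T n φ * (B n - F.T n ψ)) ≤ D * hsn (B n - F.T n ψ) :=
    (hsn_mul_left _ _).trans (mul_le_mul_of_nonneg_right (hD n) (hsn_nonneg _))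
  rw [div_mul_eq_mul_div, ← mul_div_assoc, ← add_div, ← add_div]
  gcongr
  rw [e1]
  exact (hsn_add _ _).trans (add_le_add_left ((hsn_add _ _).trans (add_le_add e2 e3)) _)

lemma hsn_div_le {n : ℕ} (A : Matrix (Fin ν → Fin n) (Fin ν → Fin n) ℂ) : hsn A / √((n : ℝ) ^ ν) ≤ ‖A‖ := by
  have := hsn_le A
  simp only [Fintype.card_pi, Fintype.card_fin, Finset.prod_const, Finset.card_univ, Nat.cast_pow] at this
  exact div_le_of_le_mul₀ (Real.sqrt_nonneg _) (norm_nonneg _) this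

lemma FSys.sym_limit (F : FSys μ ν) {A : ∀ n, Matrix (Fin ν → Fin n) (Fin ν → Fin n) ℂ} {φ : X → ℝ} (h : BM φ)
    (H : ∀ ε > 0, ∃ B ψ, F.Sym B ψ ∧ (∀ n, ‖A n - B n‖ ≤ ε) ∧ ∀ x, |φ x - ψ x| ≤ ε) : F.Sym A φ := by
  refine ⟨h, ?_, ?_⟩
  · obtain ⟨B, ψ, ⟨_, ⟨C, hC⟩, _⟩, h2, _⟩ := H 1 one_pos
    refine ⟨1 + C, fun n => ?_⟩
    calc ‖A n‖ = ‖(A n - B n) + B n‖ := by simp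
      _ ≤ _ := (norm_add_le _ _).trans (add_le_add (h2 n) (hC n))
  · rw [Metric.tendsto_atTop]
    intro ε hε
    obtain ⟨B, ψ, ⟨h1, _, h3⟩, h2, h4⟩ := H (ε / 4) (by linarith)
    obtain ⟨N, hN⟩ := Metric.tendsto_atTop.1 h3 (ε / 4) (by linarith)
    refine ⟨N, fun n hn => ?_⟩
    have h5 := hN n hn
    rw [Real.dist_eq, sub_zero, abs_of_nonneg (div_nonneg (hsn_nonneg _) (Real.sqrt_nonneg _))] at h5 ⊢
    have e1 : A n - F.T n φ = ((A n - B n) - F.T n (fun x => φ x - ψ x)) + (B n - F.T n ψ) := by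
      rw [F.T_sub h h1]; abel
    have e2 : hsn ((A n - B n) - F.T n (fun x => φ x - ψ x)) / √((n : ℝ) ^ ν) ≤ ε / 2 := by
      refine (hsn_div_le _).trans ((norm_sub_le _ _).trans ?_)
      have := F.T_norm_le (h.sub h1) (by linarith) h4 n
      linarith [h2 n]
    have e3 := div_le_div_of_nonneg_right (hsn_add ((A n - B n) - F.T n (fun x => φ x - ψ x)) (B n - F.T n ψ)) (Real.sqrt_nonneg ((n : ℝ) ^ ν))
    rw [← e1, add_div] at e3
    linarith

lemma FSys.sym_const (F : FSys μ ν) (c : ℝ) : F.Sym (fun n => (c : ℂ) • 1) (fun _ => c) := by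
  simpa only [F.T_const] using F.sym_T (BM.const c)

lemma FSys.sym_poly (F : FSys μ ν) {φ : X → ℝ} (h : BM φ) (p : Polynomial ℝ) :
    F.Sym (fun n => Polynomial.aeval (F.T n φ) p) (fun x => p.eval (φ x)) := by
  induction p using Polynomial.induction_on with
  | C a =>
    simp only [Polynomial.aeval_C, Polynomial.eval_C]
    have := F.sym_const a
    convert this using 2 with n
    rw [Algebra.algebraMap_eq_smul_one]; ext i j; simp [Matrix.one_apply]
  | add p q hp hq => simpa using hp.add hq
  | monomial k a hk =>
    have := hk.mul (F.sym_T h)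
    simpa [pow_succ, mul_assoc] using this

lemma FSys.sa (F : FSys μ ν) {φ : X → ℝ} (h : BM φ) (n : ℕ) : IsSelfAdjoint (F.T n φ) := by
  ext i j
  simp only [FSys.T, compr, star_apply, of_apply, RCLike.star_def, inner_conj_symm]
  exact mulOp_symm h _ _

open scoped MatrixOrder ComplexOrder in
lemma FSys.spec (F : FSys μ ν) {φ : X → ℝ} (h : BM φ) {m M : ℝ} (hm : ∀ x, φ x ∈ Set.Icc m M) (n : ℕ) :
    spectrum ℝ (F.T n φ) ⊆ Set.Icc m M := by
  have key : ∀ c : ℝ, algebraMap ℝ (Matrix (Fin ν → Fin n) (Fin ν → Fin n) ℂ) c = F.T n (fun _ => c) := by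
    intro c
    rw [F.T_const, Algebra.algebraMap_eq_smul_one]; ext i j; simp [Matrix.one_apply]
  have h1 : algebraMap ℝ _ m ≤ F.T n φ := by
    rw [key, Matrix.le_iff, ← F.T_sub h (BM.const m)]
    exact compr_posSemidef (mulOp_isPositive (h.sub (BM.const m)) fun x => sub_nonneg.2 (hm x).1)
  have h2 : F.T n φ ≤ algebraMap ℝ _ M := by
    rw [key, Matrix.le_iff, ← F.T_sub (BM.const M) h]
    exact compr_posSemidef (mulOp_isPositive ((BM.const M).sub h) fun x => sub_nonneg.2 (hm x).2)
  intro x hx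
  exact ⟨(algebraMap_le_iff_le_spectrum (F.sa h n)).1 h1 x hx, (le_algebraMap_iff_spectrum_le (F.sa h n)).1 h2 x hx⟩

lemma FSys.sym_cfc (F : FSys μ ν) {φ : X → ℝ} (h : BM φ) {m M : ℝ} (hm : ∀ x, φ x ∈ Set.Icc m M)
    {f : ℝ → ℝ} (hf : ContinuousOn f (Set.Icc m M)) (hb : BM (fun x => f (φ x))) :
    F.Sym (fun n => cfc f (F.T n φ)) (fun x => f (φ x)) := by
  refine F.sym_limit hb fun ε hε => ?_
  obtain ⟨p, hp⟩ := exists_polynomial_near_of_continuousOn m M f hf ε hε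
  refine ⟨_, _, F.sym_poly h p, fun n => ?_, fun x => ?_⟩
  · rw [← cfc_polynomial p (F.T n φ) (F.sa h n), ← cfc_sub f p.eval _ (hf.mono (F.spec h hm n)) p.continuous.continuousOn]
    refine norm_cfc_le hε.le fun x hx => ?_
    rw [norm_sub_rev]
    exact (hp x (F.spec h hm n hx)).le
  · rw [abs_sub_comm]
    exact (hp _ (hm x)).le

lemma FSys.sym_prod (F : FSys μ ν) {r : ℕ} {A : Fin r → ∀ n, Matrix (Fin ν → Fin n) (Fin ν → Fin n) ℂ} {φ : Fin r → X → ℝ}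
    (h : ∀ k, F.Sym (A k) (φ k)) : F.Sym (fun n => (List.ofFn fun k => A k n).prod) (fun x => ∏ k, φ k x) := by
  induction r with
  | zero => simpa using F.sym_const 1
  | succ r ih =>
    simp only [List.ofFn_succ, List.prod_cons, Fin.prod_univ_succ]
    exact (h 0).mul (ih fun k => h k.succ)

lemma FSys.Sym.trace {F : FSys μ ν} {A : ∀ n, Matrix (Fin ν → Fin n) (Fin ν → Fin n) ℂ} {φ : X → ℝ}
    (hA : F.Sym A φ) : Tendsto (fun n : ℕ => ((n : ℂ) ^ ν)⁻¹ * (A n).trace) atTop (nhds ((∫ x, φ x ∂μ : ℝ) : ℂ)) := by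
  obtain ⟨h1, -, h3⟩ := hA
  rw [tendsto_iff_norm_sub_tendsto_zero]
  refine squeeze_zero' (Eventually.of_forall fun n => norm_nonneg _) ?_ h3
  filter_upwards [eventually_ge_atTop 1] with n hn
  have hpos : (0 : ℝ) < (n : ℝ) ^ ν := by positivity
  have hne : (n : ℂ) ^ ν ≠ 0 := by
    have : (n : ℂ) ≠ 0 := by norm_cast; omega
    positivity
  have h4 : (F.T n φ).trace = (n : ℂ) ^ ν * ((∫ x, φ x ∂μ : ℝ) : ℂ) := by
    have : ∀ j, F.T n φ j j = ((∫ x, φ x ∂μ : ℝ) : ℂ) := by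
      intro j
      rw [F.T_apply h1, sub_self, FSys.coef, ← integral_complex_ofReal]
      simp [F.zeroE]
    simp [Matrix.trace, this]
  have h5 : ((n : ℂ) ^ ν)⁻¹ * (A n).trace - ((∫ x, φ x ∂μ : ℝ) : ℂ) = ((n : ℂ) ^ ν)⁻¹ * (A n - F.T n φ).trace := by
    rw [Matrix.trace_sub, h4, mul_sub, inv_mul_cancel_left₀ hne]
  rw [h5, norm_mul]
  have h6 := trace_le_hsn (A n - F.T n φ)
  simp only [Fintype.card_pi, Fintype.card_fin, Finset.prod_const, Finset.card_univ, Nat.cast_pow] at h6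
  have h7 : ‖((n : ℂ) ^ ν)⁻¹‖ = ((n : ℝ) ^ ν)⁻¹ := by simp
  rw [h7, inv_mul_le_iff₀ hpos]
  refine h6.trans (le_of_eq ?_)
  have h8 := Real.sq_sqrt hpos.le
  have h9 := Real.sqrt_pos.2 hpos
  rw [mul_div_assoc', eq_div_iff h9.ne']
  linear_combination (hsn (A n - F.T n φ)) * h8

end fsys

section torus
open scoped Pointwise

/-- The normalised measure on the circle. -/
local instance instMSCircle : MeasureSpace UnitAddCircle := ⟨AddCircle.haarAddCircle⟩

local instance instProbCircle : IsProbabilityMeasure (volume : Measure UnitAddCircle) :=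
  inferInstanceAs (IsProbabilityMeasure AddCircle.haarAddCircle)

/-- coordinates on the torus -/
def lft {ν : ℕ} (t : UnitAddTorus (Fin ν)) : Fin ν → ℝ := fun i => 2 * Real.pi * (AddCircle.equivIoc 1 0 (t i) : ℝ)

lemma lft_measurable {ν : ℕ} : Measurable (lft (ν := ν)) := by
  refine measurable_pi_lambda _ fun i => ?_
  refine Measurable.const_mul ?_ _
  exact measurable_subtype_coe.comp ((AddCircle.measurableEquivIoc 1 0).measurable.comp (measurable_pi_apply i))

lemma transfer {ν : ℕ} {E : Type*} [NormedAddCommGroup E] [NormedSpace ℝ E] (g : (Fin ν → ℝ) → E) :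
    ∫ t : UnitAddTorus (Fin ν), g (lft t) = ((2 * Real.pi) ^ ν)⁻¹ • ∫ x in cube ν, g x := by
  have h1 := UnitAddTorus.integral_preimage (d := Fin ν) (fun t => g (lft t)) (fun _ => 0)
  have hms : MeasurableSet {x : Fin ν → ℝ | ∀ i, x i ∈ Ioc (0 : ℝ) (0 + 1)} :=
    MeasurableSet.univ_pi' (fun i => measurableSet_Ioc)
  have h2 : ∫ x in {x : Fin ν → ℝ | ∀ i, x i ∈ Ioc (0 : ℝ) (0 + 1)}, g (lft (fun i => (x i : UnitAddCircle)))
      = ∫ x in {x : Fin ν → ℝ | ∀ i, x i ∈ Ioc (0 : ℝ) (0 + 1)}, g ((2 * Real.pi) • x) := by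
    refine setIntegral_congr_fun hms fun x hx => ?_
    congr 1
    funext i
    simp only [lft, Pi.smul_apply, smul_eq_mul]
    rw [AddCircle.equivIoc_coe_eq (hx i)]
  refine h1.trans (h2.trans ?_)
  rw [Measure.setIntegral_comp_smul_of_pos _ _ _ (by positivity : (0:ℝ) < 2 * Real.pi)]
  have h3 : ((2 * Real.pi) • {x : Fin ν → ℝ | ∀ i, x i ∈ Ioc (0 : ℝ) (0 + 1)}) =
      Set.univ.pi fun _ => Set.Ioc 0 (2 * Real.pi) := by
    have hp : 0 < 2 * Real.pi := by positivity
    ext y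
    rw [Set.mem_smul_set_iff_inv_smul_mem₀ hp.ne']
    simp only [mem_setOf_eq, Set.mem_univ_pi, Pi.smul_apply, smul_eq_mul, mem_Ioc, zero_add]
    refine forall_congr' fun i => ?_
    rw [inv_mul_le_iff₀ hp, mul_one]
    have : 0 < (2 * Real.pi)⁻¹ := by positivity
    rw [mul_pos_iff_of_pos_left this]
  rw [h3, Module.finrank_fin_fun]
  congr 1
  refine setIntegral_congr_set ?_
  exact (Measure.univ_pi_Ioc_ae_eq_Icc (μ := fun _ : Fin ν => (volume : Measure ℝ))).trans
    (Measure.univ_pi_Ico_ae_eq_Icc (μ := fun _ : Fin ν => (volume : Measure ℝ))).symm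

/-- The Fourier system on the torus. -/
def torusSys (ν : ℕ) : FSys (volume : Measure (UnitAddTorus (Fin ν))) ν where
  e := UnitAddTorus.mFourierBasis
  E := fun j => UnitAddTorus.mFourier j
  ae := fun j => by
    rw [UnitAddTorus.coe_mFourierBasis]
    exact UnitAddTorus.coeFn_mFourierLp 2 j
  mulE := fun j k x => by
    rw [← UnitAddTorus.mFourier_neg, ← UnitAddTorus.mFourier_neg, ← UnitAddTorus.mFourier_add]
    congr 2; abel
  zeroE := fun x => by rw [UnitAddTorus.mFourier_zero]; rfl

lemma mFourier_lft {ν : ℕ} (j : Fin ν → ℤ) (t : UnitAddTorus (Fin ν)) :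
    starRingEnd ℂ (UnitAddTorus.mFourier j t) = Complex.exp (-Complex.I * ∑ m, (j m : ℂ) * (lft t m : ℂ)) := by
  rw [← UnitAddTorus.mFourier_neg]
  simp only [UnitAddTorus.mFourier, ContinuousMap.coe_mk]
  rw [Finset.mul_sum, Complex.exp_sum]
  refine Finset.prod_congr rfl fun i _ => ?_
  have : t i = ((AddCircle.equivIoc 1 0 (t i) : ℝ) : UnitAddCircle) :=
    ((AddCircle.equivIoc (1 : ℝ) 0).symm_apply_apply (t i)).symm
  conv_lhs => rw [this]
  rw [fourier_coe_apply]
  congr 1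
  simp only [lft, Pi.neg_apply]
  push_cast; ring

lemma toeplitz_eq {ν : ℕ} (n : ℕ) (a : (Fin ν → ℝ) → ℝ) (h : BM a) :
    toeplitz n (fun x => (a x : ℂ)) = (torusSys ν).T n (fun t => a (lft t)) := by
  have hb : BM (fun t : UnitAddTorus (Fin ν) => a (lft t)) :=
    ⟨h.1.comp lft_measurable, h.2.imp fun C hC t => hC _⟩
  ext j k
  rw [FSys.T_apply _ hb, toeplitz, of_apply, fourierCoefficient, FSys.coef]
  have := transfer (ν := ν) (fun x => (a x : ℂ) * Complex.exp (-Complex.I * ∑ m, ((((j m : ℤ) - (k m : ℤ) : ℤ)) : ℂ) * (x m : ℂ)))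
  rw [Complex.real_smul] at this
  rw [Complex.ofReal_inv] at this
  rw [← this]
  refine integral_congr_ae (Eventually.of_forall fun t => ?_)
  simp only [torusSys]
  rw [mFourier_lft]
  rfl

lemma toeplitz_congr {ν : ℕ} (n : ℕ) {a b : (Fin ν → ℝ) → ℝ} (h : ∀ᵐ x ∂(volume.restrict (cube ν)), a x = b x) :
    toeplitz n (fun x => (a x : ℂ)) = toeplitz n (fun x => (b x : ℂ)) := by
  ext j k
  simp only [toeplitz, of_apply, fourierCoefficient]
  congr 1
  refine integral_congr_ae ?_
  filter_upwards [h] with x hx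
  rw [hx]

lemma final {ν r : ℕ} (a : Fin r → (Fin ν → ℝ) → ℝ) (m M : Fin r → ℝ)
    (hmeas : ∀ k, Measurable (a k))
    (hrange : ∀ k, ∀ᵐ x ∂(volume.restrict (cube ν)), a k x ∈ Set.Icc (m k) (M k))
    (f : Fin r → ℝ → ℝ)
    (hf : ∀ k, ContinuousOn (f k) (Set.Icc (m k) (M k))) :
    Tendsto
      (fun n : ℕ => ((n : ℂ) ^ ν)⁻¹ *
        Matrix.trace
          (List.ofFn fun k => cfc (f k) (toeplitz n (fun x => (a k x : ℂ)))).prod)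
      atTop
      (nhds ((((2 * Real.pi) ^ ν : ℝ) : ℂ)⁻¹ *
        ((∫ x in cube ν, ∏ k, f k (a k x) : ℝ) : ℂ))) := by
  have hp : 0 < 2 * Real.pi := by positivity
  have hmM : ∀ k, m k ≤ M k := by
    intro k
    have hne : (ae (volume.restrict (cube ν))).NeBot := by
      rw [ae_neBot]
      intro h0
      have : volume (cube ν) = 0 := by rw [← Measure.restrict_apply_univ, h0]; simp
      rw [cube, volume_pi_pi] at this
      simp at this
      exact absurd this.1 Real.pi_pos.not_ge
    obtain ⟨x, hx⟩ := (hrange k).exists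
    exact hx.1.trans hx.2
  let b : Fin r → (Fin ν → ℝ) → ℝ := fun k x => (Set.projIcc (m k) (M k) (hmM k) (a k x) : ℝ)
  have hbm : ∀ k x, b k x ∈ Set.Icc (m k) (M k) := fun k x => Subtype.coe_prop _
  have hbB : ∀ k, BM (b k) := fun k => ⟨(continuous_subtype_val.comp continuous_projIcc).measurable.comp (hmeas k),
    max |m k| |M k|, fun x => abs_le_max_abs_abs (hbm k x).1 (hbm k x).2⟩
  have hab : ∀ k, ∀ᵐ x ∂(volume.restrict (cube ν)), a k x = b k x := by
    intro k
    filter_upwards [hrange k] with x hx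
    simp only [b]
    rw [Set.projIcc_of_mem _ hx]
  have hfb : ∀ k, BM (fun t : UnitAddTorus (Fin ν) => f k (b k (lft t))) := by
    intro k
    have hc : Continuous ((Set.Icc (m k) (M k)).restrict (f k)) := (hf k).restrict
    obtain ⟨C, hC⟩ := isCompact_Icc.exists_bound_of_continuousOn (hf k)
    refine ⟨?_, C, fun t => hC _ (hbm k _)⟩
    have : (fun t : UnitAddTorus (Fin ν) => f k (b k (lft t))) =
      (fun y => (Set.Icc (m k) (M k)).restrict (f k) (Set.projIcc (m k) (M k) (hmM k) y)) ∘ (fun t => a k (lft t)) := rfl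
    rw [this]
    exact (hc.comp continuous_projIcc).measurable.comp ((hmeas k).comp lft_measurable)
  have hb2 : ∀ k, BM (fun t : UnitAddTorus (Fin ν) => b k (lft t)) := fun k =>
    ⟨(hbB k).1.comp lft_measurable, (hbB k).2.imp fun C hC t => hC _⟩
  have key := ((torusSys ν).sym_prod (fun k => (torusSys ν).sym_cfc (hb2 k) (fun t => hbm k _) (hf k) (hfb k))).trace
  have hint : ∫ t : UnitAddTorus (Fin ν), ∏ k, f k (b k (lft t)) =
      ((2 * Real.pi) ^ ν)⁻¹ * ∫ x in cube ν, ∏ k, f k (a k x) := by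
    rw [transfer (fun x => ∏ k, f k (b k x)), smul_eq_mul]
    congr 1
    refine integral_congr_ae ?_
    filter_upwards [ae_all_iff.2 hab] with x hx
    exact Finset.prod_congr rfl fun k _ => by rw [hx k]
  rw [hint, Complex.ofReal_mul, Complex.ofReal_inv] at key
  refine key.congr fun n => ?_
  congr 4
  funext k
  rw [toeplitz_congr n (hab k), toeplitz_eq n (b k) (hbB k)]

end torus

/-- **Szegő-type theorem, continuous-function version.**  For bounded measurable real-valued
`a_1, …, a_r : [0,2π)^ν → ℝ` with essential range of `a_k` contained in `[m_k, M_k]`, and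
continuous `f_k : [m_k, M_k] → ℝ` (applied to the Hermitian matrices `T_n(a_k)` via the
continuous functional calculus),
`lim_n (1/n^ν) Tr[f_1(T_n(a_1)) ⋯ f_r(T_n(a_r))]
  = (2π)^{−ν} ∫_{[0,2π)^ν} f_1(a_1(x)) ⋯ f_r(a_r(x)) dx`. -/
theorem szego_continuous {ν r : ℕ} (hν : 1 ≤ ν)
    (a : Fin r → (Fin ν → ℝ) → ℝ) (m M : Fin r → ℝ)
    (hmeas : ∀ k, Measurable (a k))
    (hrange : ∀ k, ∀ᵐ x ∂(volume.restrict (cube ν)), a k x ∈ Set.Icc (m k) (M k))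
    (f : Fin r → ℝ → ℝ)
    (hf : ∀ k, ContinuousOn (f k) (Set.Icc (m k) (M k))) :
    Tendsto
      (fun n : ℕ => ((n : ℂ) ^ ν)⁻¹ *
        Matrix.trace
          (List.ofFn fun k => cfc (f k) (toeplitz n (fun x => (a k x : ℂ)))).prod)
      atTop
      (nhds ((((2 * Real.pi) ^ ν : ℝ) : ℂ)⁻¹ *
        ((∫ x in cube ν, ∏ k, f k (a k x) : ℝ) : ℂ))) := by
  exact final a m M hmeas hrange f hf

end
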